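/- Let c > 0 and R > 0. Let w : ℝ³ → ℝ be continuous on {x : |x| ≥ R}, twice continuously differentiable on {x : |x| > R}, satisfying Δw(x) ≥ c·w(x) for all |x| > R, and w(x) → 0 as |x| → ∞. Then there exists a constant C > 0 such that w(x) ≤ C·e^{−√c·|x|} for every x with |x| ≥ R. (Exponential decay of subsolutions on exterior domains, via comparison with the fundamental solution of −Δ + c.) -/

import Mathlib

noncomputable section

/-- `ℝ³` modeled as the Euclidean space on `Fin 3`. -/
abbrev E3 := EuclideanSpace ℝ (Fin 3)

/-- The `k`-th standard basis vector of `ℝ³`. -/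
noncomputable def e3 (k : Fin 3) : E3 := EuclideanSpace.single k 1

/-- The Laplacian of a real-valued function on `ℝ³`. -/
noncomputable def lapR (g : E3 → ℝ) (x : E3) : ℝ :=
  ∑ k, fderiv ℝ (fun y => fderiv ℝ g y (e3 k)) x (e3 k)

open Filter Topology

/-- At an interior local maximum, a second directional derivative is nonpositive. -/
lemma secondDirectionalDeriv_nonpos_of_isLocalMax {E : Type*} [NormedAddCommGroup E]
    [NormedSpace ℝ E] {f : E → ℝ} {x : E} (hf : ContDiffAt ℝ 2 f x) (hmax : IsLocalMax f x)
    (e : E) : fderiv ℝ (fun y => fderiv ℝ f y e) x e ≤ 0 := by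
  by_contra! hpos
  set line : ℝ → E := fun t => x + t • e with hline
  have hline0 : line 0 = x := by simp [hline]
  have hlined : ∀ t, HasDerivAt line e t := fun t => by
    simpa [hline] using ((hasDerivAt_id t).smul_const e).const_add x
  have htend : Tendsto line (𝓝 0) (𝓝 x) := by
    simpa [hline0] using (hlined 0).continuousAt.tendsto
  have hderiv : deriv (f ∘ line) =ᶠ[𝓝 0] fun t => fderiv ℝ f (line t) e := by
    have hev : ∀ᶠ y in 𝓝 x, DifferentiableAt ℝ f y :=
      (hf.eventually (by simp)).mono fun y hy => hy.differentiableAt (by simp)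
    filter_upwards [htend.eventually hev] with t ht
    exact (ht.hasFDerivAt.comp_hasDerivAt t (hlined t)).deriv
  have hD : DifferentiableAt ℝ (fun y => fderiv ℝ f y e) x :=
    ((hf.fderiv_right (m := 1) (by norm_num)).differentiableAt (by simp)).clm_apply
      (differentiableAt_const e)
  have hsecond : deriv (deriv (f ∘ line)) 0 = fderiv ℝ (fun y => fderiv ℝ f y e) x e := by
    rw [hderiv.deriv_eq]
    exact (HasFDerivAt.comp_hasDerivAt_of_eq 0 hD.hasFDerivAt (hlined 0) hline0.symm).deriv
  have hmax' : IsLocalMax (f ∘ line) 0 := by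
    filter_upwards [htend.eventually hmax] with t ht
    simpa [hline0] using ht
  have hcont : ContinuousAt (f ∘ line) 0 :=
    ContinuousAt.comp (by rw [hline0]; exact hf.continuousAt) (hlined 0).continuousAt
  have hmin : IsLocalMin (f ∘ line) 0 :=
    isLocalMin_of_deriv_deriv_pos (by rwa [hsecond]) hmax'.deriv_eq_zero hcont
  have hconst : f ∘ line =ᶠ[𝓝 0] fun _ => f (line 0) := by
    filter_upwards [hmax', hmin] with t h₁ h₂
    exact le_antisymm h₁ h₂
  have hzero : deriv (deriv (f ∘ line)) 0 = 0 := by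
    rw [hconst.deriv.deriv_eq]
    simp
  linarith

lemma lapR_nonpos_of_isLocalMax {f : E3 → ℝ} {x : E3} (hf : ContDiffAt ℝ 2 f x)
    (hmax : IsLocalMax f x) : lapR f x ≤ 0 :=
  Finset.sum_nonpos fun k _ => secondDirectionalDeriv_nonpos_of_isLocalMax hf hmax (e3 k)

lemma lapR_sub_const_mul {f g : E3 → ℝ} {x : E3} (hf : ContDiffAt ℝ 2 f x)
    (hg : ContDiffAt ℝ 2 g x) (C : ℝ) :
    lapR (fun y => f y - C * g y) x = lapR f x - C * lapR g x := by
  have hev : ∀ {h : E3 → ℝ}, ContDiffAt ℝ 2 h x → ∀ᶠ y in 𝓝 x, DifferentiableAt ℝ h y :=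
    fun hh => (hh.eventually (by simp)).mono fun y hy => hy.differentiableAt (by simp)
  have hD : ∀ {h : E3 → ℝ}, ContDiffAt ℝ 2 h x → ∀ e : E3,
      DifferentiableAt ℝ (fun y => fderiv ℝ h y e) x := fun hh e =>
    ((hh.fderiv_right (m := 1) (by norm_num)).differentiableAt (by simp)).clm_apply
      (differentiableAt_const e)
  unfold lapR
  rw [Finset.mul_sum, ← Finset.sum_sub_distrib]
  refine Finset.sum_congr rfl fun k _ => ?_
  have hfirst : (fun y => fderiv ℝ (fun z => f z - C * g z) y (e3 k)) =ᶠ[𝓝 x]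
      fun y => fderiv ℝ f y (e3 k) - C * fderiv ℝ g y (e3 k) := by
    filter_upwards [hev hf, hev hg] with y h₁ h₂
    rw [(h₁.hasFDerivAt.fun_sub (h₂.hasFDerivAt.const_mul C)).fderiv]
    simp
  rw [hfirst.fderiv_eq,
    ((hD hf (e3 k)).hasFDerivAt.fun_sub ((hD hg (e3 k)).hasFDerivAt.const_mul C)).fderiv]
  simp

lemma hasFDerivAt_norm_of_ne_zero {E : Type*} [NormedAddCommGroup E] [InnerProductSpace ℝ E]
    {x : E} (hx : x ≠ 0) : HasFDerivAt (fun y : E => ‖y‖) (‖x‖⁻¹ • innerSL ℝ x) x := by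
  have hx' : ‖x‖ ^ 2 ≠ 0 := by simpa using hx
  have h := (hasStrictFDerivAt_norm_sq x).hasFDerivAt.sqrt hx'
  simp only [Real.sqrt_sq (norm_nonneg _)] at h
  convert h using 1
  ext v
  have : ‖x‖ ≠ 0 := by simpa using hx
  simp
  field_simp

lemma hasFDerivAt_exp_neg_mul_norm {E : Type*} [NormedAddCommGroup E] [InnerProductSpace ℝ E]
    (s : ℝ) {x : E} (hx : x ≠ 0) :
    HasFDerivAt (fun y : E => Real.exp (-s * ‖y‖))
      (Real.exp (-s * ‖x‖) • (-s) • ‖x‖⁻¹ • innerSL ℝ x) x :=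
  ((hasFDerivAt_norm_of_ne_zero hx).const_mul (-s)).exp

/-- The radial exponential satisfies `Δ e^{-s|x|} = (s² - 2s/|x|) e^{-s|x|}` off the origin. -/
lemma lapR_exp_neg_mul_norm (s : ℝ) {x : E3} (hx : x ≠ 0) :
    lapR (fun y => Real.exp (-s * ‖y‖)) x = (s ^ 2 - 2 * s / ‖x‖) * Real.exp (-s * ‖x‖) := by
  have hr : ‖x‖ ≠ 0 := by simpa using hx
  have hterm : ∀ k, fderiv ℝ (fun y => fderiv ℝ (fun z : E3 => Real.exp (-s * ‖z‖)) y (e3 k)) x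
      (e3 k) = Real.exp (-s * ‖x‖) *
        (s ^ 2 * x k ^ 2 / ‖x‖ ^ 2 - s / ‖x‖ + s * x k ^ 2 / ‖x‖ ^ 3) := by
    intro k
    have hfirst : (fun y => fderiv ℝ (fun z : E3 => Real.exp (-s * ‖z‖)) y (e3 k)) =ᶠ[𝓝 x]
        fun y => Real.exp (-s * ‖y‖) * (-s * (‖y‖⁻¹ * EuclideanSpace.proj (𝕜 := ℝ) k y)) := by
      filter_upwards [isOpen_ne.mem_nhds hx] with y hy
      rw [(hasFDerivAt_exp_neg_mul_norm s hy).fderiv]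
      simp [e3, EuclideanSpace.inner_single_right]
    have hinv := (hasDerivAt_inv hr).comp_hasFDerivAt x (hasFDerivAt_norm_of_ne_zero hx)
    have hproj := (EuclideanSpace.proj (𝕜 := ℝ) k : E3 →L[ℝ] ℝ).hasFDerivAt (x := x)
    have h := (hasFDerivAt_exp_neg_mul_norm s hx).mul ((hinv.mul hproj).const_mul (-s))
    rw [hfirst.fderiv_eq]
    refine (congrArg (fun L => L (e3 k)) h.fderiv).trans ?_
    simp [e3, EuclideanSpace.inner_single_right]
    field_simp
    ring
  have hsq : ‖x‖ ^ 2 = x 0 ^ 2 + x 1 ^ 2 + x 2 ^ 2 := by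
    simp [EuclideanSpace.norm_sq_eq, Fin.sum_univ_three]
  unfold lapR
  simp only [hterm, Fin.sum_univ_three]
  have h2 : x 2 ^ 2 = ‖x‖ ^ 2 - x 0 ^ 2 - x 1 ^ 2 := by linarith
  rw [h2]
  field_simp
  ring

/-- **Exponential decay of subsolutions on exterior domains.** If `w` is continuous on
`{|x| ≥ R}`, `C²` on `{|x| > R}`, satisfies `Δw ≥ c·w` there, and `w(x) → 0` as
`|x| → ∞`, then `w(x) ≤ C·e^{−√c·|x|}` on `{|x| ≥ R}` for some constant `C > 0`. -/
theorem exterior_exponential_decay (c R : ℝ) (hc : 0 < c) (hR : 0 < R) (w : E3 → ℝ)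
    (hcont : ContinuousOn w {x : E3 | R ≤ ‖x‖})
    (hC2 : ContDiffOn ℝ 2 w {x : E3 | R < ‖x‖})
    (hsub : ∀ x : E3, R < ‖x‖ → c * w x ≤ lapR w x)
    (hdecay : ∀ η > (0 : ℝ), ∃ ρ : ℝ, ∀ x : E3, ρ ≤ ‖x‖ → |w x| ≤ η) :
    ∃ C > (0 : ℝ), ∀ x : E3, R ≤ ‖x‖ → w x ≤ C * Real.exp (-Real.sqrt c * ‖x‖) := by
  set s := Real.sqrt c
  have hs0 : 0 < s := Real.sqrt_pos.2 hc
  have hs2 : s ^ 2 = c := Real.sq_sqrt hc.le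
  obtain ⟨M, hM⟩ := (isCompact_sphere (0 : E3) R).exists_bound_of_continuousOn
    (hcont.mono fun x hx => by simp_all)
  set C := (|M| + 1) * Real.exp (s * R) with hC
  have hC0 : 0 < C := by positivity
  refine ⟨C, hC0, fun x₀ hx₀ => ?_⟩
  by_contra! hlt
  set v : E3 → ℝ := fun y => w y - C * Real.exp (-s * ‖y‖)
  have hv₀ : 0 < v x₀ := sub_pos.2 hlt
  obtain ⟨ρ, hρ⟩ := hdecay (v x₀ / 2) (by positivity)
  have hfar : ∀ x : E3, ρ ≤ ‖x‖ → v x < v x₀ := fun x hx => by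
    have h₁ := (abs_le.1 (hρ x hx)).2
    have h₂ : 0 < C * Real.exp (-s * ‖x‖) := by positivity
    have h₃ : v x = w x - C * Real.exp (-s * ‖x‖) := rfl
    linarith
  have hsphere : ∀ x : E3, ‖x‖ = R → v x < v x₀ := fun x hx => by
    have h₁ := hM x (by simpa using hx)
    have h₂ : C * Real.exp (-s * ‖x‖) = |M| + 1 := by
      rw [hx, hC, mul_assoc, ← Real.exp_add]
      simp
    have h₃ : v x = w x - C * Real.exp (-s * ‖x‖) := rfl
    have h₄ := le_abs_self (w x)
    have h₅ := le_abs_self M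
    rw [Real.norm_eq_abs] at h₁
    linarith
  have hK : IsCompact (Metric.closedBall (0 : E3) ρ ∩ {x : E3 | R ≤ ‖x‖}) :=
    (isCompact_closedBall _ _).inter_right (isClosed_le continuous_const continuous_norm)
  have hvcont : ContinuousOn v {x : E3 | R ≤ ‖x‖} := hcont.sub (by fun_prop)
  have hx₀ρ : ‖x₀‖ < ρ := lt_of_not_ge fun h => (hfar x₀ h).false
  obtain ⟨x, ⟨hxρ, hxR⟩, hxmax⟩ := hK.exists_isMaxOn ⟨x₀, by simpa using hx₀ρ.le, hx₀⟩
    (hvcont.mono Set.inter_subset_right)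
  have hvx : v x₀ ≤ v x := hxmax ⟨by simpa using hx₀ρ.le, hx₀⟩
  have hxρ' : ‖x‖ < ρ := lt_of_not_ge fun h => (hfar x h).not_ge hvx
  have hxR' : R < ‖x‖ := lt_of_le_of_ne hxR fun h => (hsphere x h.symm).not_ge hvx
  have hx0 : x ≠ 0 := norm_pos_iff.1 (hR.trans hxR')
  have hlocal : IsLocalMax v x := by
    filter_upwards [continuous_norm.continuousAt.eventually_lt_const hxρ',
      continuous_norm.continuousAt.eventually_const_lt hxR'] with y h₁ h₂
    exact hxmax ⟨by simpa using h₁.le, h₂.le⟩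
  have hwC2 : ContDiffAt ℝ 2 w x :=
    hC2.contDiffAt ((isOpen_lt continuous_const continuous_norm).mem_nhds hxR')
  have hexpC2 : ContDiffAt ℝ 2 (fun y : E3 => Real.exp (-s * ‖y‖)) x :=
    (contDiffAt_const.mul (contDiffAt_norm ℝ hx0)).exp
  have hlap := lapR_nonpos_of_isLocalMax
    (hwC2.sub (contDiffAt_const.mul hexpC2)) hlocal
  rw [lapR_sub_const_mul hwC2 hexpC2, lapR_exp_neg_mul_norm s hx0, hs2] at hlap
  have hvx' : 0 < c * (w x - C * Real.exp (-s * ‖x‖)) := mul_pos hc (hv₀.trans_le hvx)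
  have hstrict : 0 < C * (2 * s / ‖x‖ * Real.exp (-s * ‖x‖)) := by
    have := hR.trans hxR'
    positivity
  have := hsub x hxR'
  linarith
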